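/- Let (Ψ_n)_{n≥1} and Ψ be random measures on ℝ^d such that Ψ_n converges to Ψ in distribution with respect to the vague topology on M(ℝ^d) (the topology generated by the maps ψ ↦ ∫ f dψ for continuous compactly supported f : ℝ^d → ℝ). If every Ψ_n is mass-stationary, then Ψ is mass-stationary. -/

import Mathlib

open MeasureTheory ENNReal

noncomputable section

/-- `ℝ^d`. -/
abbrev Vec (d : ℕ) := Fin d → ℝ

/-- The shift `T_t ψ`, defined by `(T_t ψ)(A) = ψ(A + t)`. -/
def shiftM {d : ℕ} (t : Vec d) (ψ : Measure (Vec d)) : Measure (Vec d) :=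
  ψ.map (fun x => x - t)

/-- A measure is in `M(ℝ^d)` iff it is finite on bounded sets. -/
def BddFinite {d : ℕ} (ψ : Measure (Vec d)) : Prop :=
  ∀ s : Set (Vec d), Bornology.IsBounded s → ψ s < ⊤

/-- Translation covariance of `g : M(ℝ^d) × ℝ^d × ℝ^d → [0,∞]`. -/
def Covariant3 {d : ℕ} (g : Measure (Vec d) → Vec d → Vec d → ℝ≥0∞) : Prop :=
  ∀ (t x y : Vec d) (ψ : Measure (Vec d)), g (shiftM t ψ) (x - t) (y - t) = g ψ x y

/-- A random measure `Ψ` on a probability space `(Ω, P)` is mass-stationary if the mass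
transport principle holds for every translation-covariant measurable `g`. -/
def MassStationary {d : ℕ} {Ω : Type*} [MeasurableSpace Ω] (P : Measure Ω)
    (Ψ : Ω → Measure (Vec d)) : Prop :=
  ∀ g : Measure (Vec d) → Vec d → Vec d → ℝ≥0∞,
    Measurable (fun p : Measure (Vec d) × Vec d × Vec d => g p.1 p.2.1 p.2.2) →
    Covariant3 g →
    ∫⁻ ω, (∫⁻ y, g (Ψ ω) 0 y ∂(Ψ ω)) ∂P = ∫⁻ ω, (∫⁻ y, g (Ψ ω) y 0 ∂(Ψ ω)) ∂P

/-- Mass-stationarity expressed in terms of the law `Q` of a random measure on `ℝ^d`. -/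
def MassStationaryLaw {d : ℕ} (Q : Measure (Measure (Vec d))) : Prop :=
  ∀ g : Measure (Vec d) → Vec d → Vec d → ℝ≥0∞,
    Measurable (fun p : Measure (Vec d) × Vec d × Vec d => g p.1 p.2.1 p.2.2) →
    Covariant3 g →
    ∫⁻ ψ, (∫⁻ y, g ψ 0 y ∂ψ) ∂Q = ∫⁻ ψ, (∫⁻ y, g ψ y 0 ∂ψ) ∂Q

/-- The vague topology on measures: the topology generated by the maps
`ψ ↦ ∫ f dψ` for continuous compactly supported `f : ℝ^d → ℝ`. -/
def vagueTop (d : ℕ) : TopologicalSpace (Measure (Vec d)) :=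
  ⨅ f : {f : Vec d → ℝ // Continuous f ∧ HasCompactSupport f},
    TopologicalSpace.induced (fun ψ : Measure (Vec d) => ∫ x, f.1 x ∂ψ) inferInstance

/-!
Mass-stationarity says that the Campbell measure `E[∫ 1{(Ψ, y) ∈ ·} dΨ(y)]` is invariant under the
recentering involution `(ψ, y) ↦ (T_y ψ, -y)`. To pass to the limit, test this invariance against
the functions `e^{-∫ f dψ} w(y)` with `f ≥ 0` and `w` continuous and compactly supported. If `f ≥ 1`
on a ball large compared with the support of `w`, then `m e^{-m} ≤ 1` bounds the `ψ`-integrals over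
`y` of such a function and of its recentered version uniformly in `ψ`. The first integral is vaguely
continuous in `ψ`. The second is `∫ e^{-∫ f(x - y) dψ(x)} w(-y) dψ(y)`; replacing `y` in the
exponent by the points of a fine net, by means of a partition of unity, approximates it by vaguely
continuous functions up to an error `C min(1, η ∫ k dψ)`, whose expectation is eventually small
along the sequence. So the limit law satisfies the tested invariance, and these functions determine
a σ-finite measure on the pairs `(ψ, y)`: they are closed under multiplication, and countably many
of the integrals `∫ f dψ` separate locally finite measures.
-/

open ProbabilityTheory Filter Topology Set
open scoped BoundedContinuousFunction

section MeasureExt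

variable {α ι : Type*} [MeasurableSpace α]

lemma measure_ext_of_forall_withDensity_eq [Countable ι] {μ ν : Measure α} {f : ι → α → ℝ≥0∞}
    (hf : ∀ i, Measurable (f i)) (hf_top : ∀ i x, f i x ≠ ∞) (hf_zero : ∀ x, ∃ i, f i x ≠ 0)
    (h : ∀ i, μ.withDensity (f i) = ν.withDensity (f i)) : μ = ν := by
  have hs (i : ι) : MeasurableSet {x | f i x ≠ 0} := (hf i (measurableSet_singleton 0)).compl
  have restrict_eq (ρ : Measure α) (i : ι) :
      ((ρ.withDensity (f i)).restrict {x | f i x ≠ 0}).withDensity (fun x ↦ (f i x)⁻¹) =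
        ρ.restrict {x | f i x ≠ 0} := by
    rw [restrict_withDensity (hs i)]
    exact withDensity_inv_same (hf i) (ae_restrict_mem (hs i)) (ae_of_all _ (hf_top i))
  have hcover : ⋃ i, {x | f i x ≠ 0} = univ :=
    eq_univ_of_forall fun x ↦ mem_iUnion.2 (hf_zero x)
  refine (Measure.ext_iff_of_iUnion_eq_univ hcover).2 fun i ↦ ?_
  rw [← restrict_eq μ i, h i, restrict_eq ν i]

lemma measure_ext_of_forall_mem_submonoid_integral_eq [TopologicalSpace α] [PolishSpace α]
    [BorelSpace α] {μ ν : Measure α} [IsFiniteMeasure μ] [IsFiniteMeasure ν]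
    {S : Submonoid (α →ᵇ ℝ)} (hsep : ∀ x y, x ≠ y → ∃ g ∈ S, g x ≠ g y)
    (h : ∀ g ∈ S, ∫ x, g x ∂μ = ∫ x, g x ∂ν) : μ = ν := by
  let A : StarSubalgebra ℝ (α →ᵇ ℝ) :=
    { Algebra.adjoin ℝ (S : Set (α →ᵇ ℝ)) with
      star_mem' := fun {g} hg ↦ by rwa [show star g = g from by ext; simp] }
  have hA : (A.map (BoundedContinuousFunction.toContinuousMapStarₐ ℝ)).SeparatesPoints := by
    intro x y hxy
    obtain ⟨g, hg, hne⟩ := hsep x y hxy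
    exact ⟨g, ⟨_, ⟨g, Algebra.subset_adjoin hg, rfl⟩, rfl⟩, hne⟩
  refine ext_of_forall_mem_subalgebra_integral_eq_of_polish hA fun g hgA ↦ ?_
  have hg : g ∈ Submodule.span ℝ (S : Set (α →ᵇ ℝ)) := by
    rw [← S.closure_eq, ← Algebra.adjoin_eq_span]
    exact hgA
  clear hgA
  induction hg using Submodule.span_induction with
  | mem g hg => exact h g hg
  | zero => simp
  | add g g' _ _ hg hg' =>
    simp only [BoundedContinuousFunction.add_apply]
    rw [integral_add (g.integrable _) (g'.integrable _),
      integral_add (g.integrable _) (g'.integrable _), hg, hg']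
  | smul c g _ hg =>
    simp only [BoundedContinuousFunction.smul_apply]
    rw [integral_smul, integral_smul, hg]

end MeasureExt

section Kernel

variable {α β : Type*} [MeasurableSpace α] [MeasurableSpace β]

lemma isSFiniteKernel_of_measure_univ_lt_top (κ : Kernel α β) (h : ∀ a, κ a univ < ∞) :
    IsSFiniteKernel κ := by
  classical
  let size (a : α) : ℕ := ⌊(κ a univ).toReal⌋₊
  have hsize (n : ℕ) : MeasurableSet {a | size a = n} :=
    (Nat.measurable_floor.comp (κ.measurable_coe .univ).ennreal_toReal) (measurableSet_singleton n)
  have hfin (n : ℕ) : IsFiniteKernel (Kernel.piecewise (hsize n) κ 0) := by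
    refine ⟨(n + 1 : ℕ), ENNReal.natCast_lt_top _, fun a ↦ ?_⟩
    rw [Kernel.piecewise_apply]
    split_ifs with ha
    · rw [← ENNReal.ofReal_toReal (h a).ne, ← ENNReal.ofReal_natCast, Nat.cast_succ, ← ha]
      exact ENNReal.ofReal_le_ofReal (Nat.lt_floor_add_one _).le
    · simp
  have hsum : κ = Kernel.sum fun n ↦ Kernel.piecewise (hsize n) κ 0 := by
    ext a s hs
    rw [Kernel.sum_apply' _ _ hs, tsum_eq_single (size a)]
    · simp [Kernel.piecewise_apply]
    · intro n hn
      simp [Kernel.piecewise_apply, hn.symm]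
  rw [hsum]
  infer_instance

lemma isSFiniteKernel_of_iUnion_eq_univ (κ : Kernel α β) {s : ℕ → Set β}
    (hs : ∀ n, MeasurableSet (s n)) (hs_univ : ⋃ n, s n = univ) (h : ∀ a n, κ a (s n) < ∞) :
    IsSFiniteKernel κ := by
  have hd (n : ℕ) : MeasurableSet (disjointed s n) := .disjointed hs n
  have hsum : κ = Kernel.sum fun n ↦ κ.restrict (hd n) := by
    ext a : 1
    simp_rw [Kernel.sum_apply, Kernel.restrict_apply]
    rw [← Measure.restrict_iUnion (disjoint_disjointed s) hd, iUnion_disjointed, hs_univ,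
      Measure.restrict_univ]
  have (n : ℕ) : IsSFiniteKernel (κ.restrict (hd n)) := by
    refine isSFiniteKernel_of_measure_univ_lt_top _ fun a ↦ ?_
    rw [Kernel.restrict_apply, Measure.restrict_apply_univ]
    exact (measure_mono (disjointed_subset s n)).trans_lt (h a n)
  rw [hsum]
  infer_instance

end Kernel

lemma measurable_integral_measure {E : Type*} [MeasurableSpace E] {u : E → ℝ} (hu : Measurable u) :
    Measurable fun ψ : Measure E ↦ ∫ x, u x ∂ψ := by
  have hset : MeasurableSet {ψ : Measure E | ∫⁻ x, ‖u x‖ₑ ∂ψ < ∞} :=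
    measurableSet_lt (Measure.measurable_lintegral hu.enorm) measurable_const
  have hparts : Measurable fun ψ : Measure E ↦
      (∫⁻ x, .ofReal (u x) ∂ψ).toReal - (∫⁻ x, .ofReal (-u x) ∂ψ).toReal :=
    (Measure.measurable_lintegral hu.ennreal_ofReal).ennreal_toReal.sub
      (Measure.measurable_lintegral hu.neg.ennreal_ofReal).ennreal_toReal
  refine (congrArg Measurable (funext fun ψ ↦ ?_)).mpr (hparts.indicator hset)
  by_cases hψ : ∫⁻ x, ‖u x‖ₑ ∂ψ < ∞
  · rw [indicator_of_mem (by exact hψ)]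
    exact integral_eq_lintegral_pos_part_sub_lintegral_neg_part ⟨hu.aestronglyMeasurable, hψ⟩
  · rw [indicator_of_notMem (by exact hψ), integral_undef fun h ↦ hψ h.2]

lemma tendsto_integral_min_one_mul {X : Type*} [MeasurableSpace X] (μ : Measure X)
    [IsFiniteMeasure μ] {V : X → ℝ} (hV : Measurable V) (hV0 : 0 ≤ V) :
    Tendsto (fun η : ℝ ↦ ∫ x, min 1 (η * V x) ∂μ) (𝓝[>] 0) (𝓝 0) := by
  suffices Tendsto (fun η : ℝ ↦ ∫ x, min 1 (η * V x) ∂μ) (𝓝[>] 0) (𝓝 (∫ _, 0 ∂μ)) by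
    rwa [integral_zero] at this
  refine tendsto_integral_filter_of_dominated_convergence (fun _ ↦ 1)
    (.of_forall fun η ↦ (measurable_const.min (hV.const_mul η)).aestronglyMeasurable) ?_
    (integrable_const 1) (ae_of_all _ fun x ↦ ?_)
  · filter_upwards [self_mem_nhdsWithin] with η hη
    refine ae_of_all _ fun x ↦ ?_
    rw [Real.norm_of_nonneg (le_min zero_le_one (mul_nonneg (le_of_lt hη) (hV0 x)))]
    exact min_le_left _ _
  · have : Continuous fun η : ℝ ↦ min 1 (η * V x) := by fun_prop
    exact (this.tendsto' 0 0 (by simp)).mono_left nhdsWithin_le_nhds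

section ConvergenceInLaw

variable {X ι : Type*} [TopologicalSpace X] [MeasurableSpace X]

/-- Convergence in distribution of the measures `Q i` to `Q'` along `l`, tested against bounded
continuous functions. The topology and the σ-algebra are unrelated, so `MeasureTheory.FiniteMeasure`
and its topology are not available: a bounded continuous function need not be measurable. -/
def TendstoInLaw (Q : ι → Measure X) (l : Filter ι) (Q' : Measure X) : Prop :=
  ∀ G : X →ᵇ ℝ, Tendsto (fun i ↦ ∫ x, G x ∂Q i) l (𝓝 (∫ x, G x ∂Q'))

lemma integrable_boundedContinuous_of_measurable (G : X →ᵇ ℝ) (hG : Measurable G) (μ : Measure X)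
    [IsFiniteMeasure μ] : Integrable G μ :=
  .of_bound hG.aestronglyMeasurable ‖G‖ (ae_of_all _ G.norm_coe_le_norm)

lemma abs_integral_sub_integral_le {H : X → ℝ} (hH : Measurable H) {G E : X →ᵇ ℝ}
    (hG : Measurable G) (hE : Measurable E) (μ : Measure X) [IsFiniteMeasure μ]
    (h : ∀ᵐ x ∂μ, |H x - G x| ≤ E x) :
    |∫ x, H x ∂μ - ∫ x, G x ∂μ| ≤ ∫ x, E x ∂μ := by
  have hGi := integrable_boundedContinuous_of_measurable G hG μ
  have hEi := integrable_boundedContinuous_of_measurable E hE μ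
  have hHG : Integrable (fun x ↦ H x - G x) μ :=
    hEi.mono' (hH.sub hG).aestronglyMeasurable h
  have hHi : Integrable H μ := (hHG.add hGi).congr (ae_of_all _ fun x ↦ sub_add_cancel _ _)
  rw [← integral_sub hHi hGi]
  exact norm_integral_le_of_norm_le (f := fun x ↦ H x - G x) hEi h

lemma TendstoInLaw.tendsto_integral_of_forall_exists_abs_sub_le {Q : ι → Measure X}
    {l : Filter ι} {Q' : Measure X} [∀ i, IsFiniteMeasure (Q i)] [IsFiniteMeasure Q']
    (hQ : TendstoInLaw Q l Q') {p : X → Prop} (hp : ∀ i, ∀ᵐ x ∂Q i, p x) (hp' : ∀ᵐ x ∂Q', p x)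
    {H : X → ℝ} (hH : Measurable H)
    (h : ∀ ε > 0, ∃ G E : X →ᵇ ℝ, Measurable G ∧ Measurable E ∧
      (∀ x, p x → |H x - G x| ≤ E x) ∧ ∫ x, E x ∂Q' < ε) :
    Tendsto (fun i ↦ ∫ x, H x ∂Q i) l (𝓝 (∫ x, H x ∂Q')) := by
  refine Metric.tendsto_nhds.2 fun ε hε ↦ ?_
  obtain ⟨G, E, hG, hE, hGE, hEε⟩ := h (ε / 3) (by positivity)
  filter_upwards [(hQ E).eventually_lt_const hEε,
    Metric.tendsto_nhds.1 (hQ G) (ε / 3) (by positivity)] with i hEi hGi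
  have hi := abs_integral_sub_integral_le hH hG hE (Q i) ((hp i).mono hGE)
  have h' := abs_integral_sub_integral_le hH hG hE Q' (hp'.mono hGE)
  rw [Real.dist_eq, abs_lt] at *
  rw [abs_le] at hi h'
  constructor <;> linarith

lemma TendstoInLaw.tendsto_integral_of_forall_exists_abs_sub_le_min {Q : ι → Measure X}
    {l : Filter ι} {Q' : Measure X} [∀ i, IsFiniteMeasure (Q i)] [IsFiniteMeasure Q']
    (hQ : TendstoInLaw Q l Q') {p : X → Prop} (hp : ∀ i, ∀ᵐ x ∂Q i, p x) (hp' : ∀ᵐ x ∂Q', p x)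
    {H V : X → ℝ} {C : ℝ} (hC : 0 ≤ C) (hH : Measurable H) (hHC : ∀ x, p x → |H x| ≤ C)
    (hV : Continuous V) (hVm : Measurable V) (hV0 : 0 ≤ V)
    (h : ∀ η > 0, ∃ G : X → ℝ, Continuous G ∧ Measurable G ∧
      ∀ x, p x → |H x - G x| ≤ C * min 1 (η * V x)) :
    Tendsto (fun i ↦ ∫ x, H x ∂Q i) l (𝓝 (∫ x, H x ∂Q')) := by
  refine hQ.tendsto_integral_of_forall_exists_abs_sub_le hp hp' hH fun ε hε ↦ ?_
  have hlim : Tendsto (fun η : ℝ ↦ ∫ x, C * min 1 (η * V x) ∂Q') (𝓝[>] 0) (𝓝 0) := by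
    simpa only [integral_const_mul, mul_zero] using
      (tendsto_integral_min_one_mul Q' hVm hV0).const_mul C
  obtain ⟨η, hηε, hη⟩ :=
    ((hlim.eventually_lt_const hε).and self_mem_nhdsWithin).exists
  obtain ⟨G, hG, hGm, hHG⟩ := h η hη
  let clampG : X →ᵇ ℝ := .ofNormedAddCommGroup (fun x ↦ max (-C) (min C (G x))) (by fun_prop) C
    fun x ↦ abs_le.2 ⟨le_max_left _ _, max_le (by linarith) (min_le_left _ _)⟩
  let error : X →ᵇ ℝ := .ofNormedAddCommGroup (fun x ↦ C * min 1 (η * V x)) (by fun_prop) C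
    fun x ↦ by
      rw [Real.norm_of_nonneg
        (mul_nonneg hC (le_min zero_le_one (mul_nonneg (le_of_lt hη) (hV0 x))))]
      exact mul_le_of_le_one_right hC (min_le_left _ _)
  have hclamp (x : X) (hx : p x) : |H x - max (-C) (min C (G x))| ≤ |H x - G x| := by
    have := abs_le.1 (hHC x hx)
    grind
  exact ⟨clampG, error, measurable_const.max (measurable_const.min hGm),
    measurable_const.mul (measurable_const.min (hVm.const_mul η)),
    fun x hx ↦ (hclamp x hx).trans (hHG x hx), hηε⟩

end ConvergenceInLaw

lemma abs_exp_neg_sub_exp_neg_le {a b m : ℝ} (ha : m ≤ a) (hb : m ≤ b) :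
    |Real.exp (-a) - Real.exp (-b)| ≤ Real.exp (-m) * min 1 |a - b| := by
  wlog hab : a ≤ b generalizing a b
  · rw [abs_sub_comm, abs_sub_comm a]
    exact this hb ha (le_of_not_ge hab)
  have hfactor : Real.exp (-a) - Real.exp (-b) = Real.exp (-a) * (1 - Real.exp (-(b - a))) := by
    rw [mul_sub, mul_one, ← Real.exp_add]
    ring_nf
  have hle_one : Real.exp (-(b - a)) ≤ 1 := Real.exp_le_one_iff.2 (by linarith)
  rw [hfactor, abs_of_nonneg (mul_nonneg (Real.exp_pos _).le (sub_nonneg.2 hle_one))]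
  have hmin : 1 - Real.exp (-(b - a)) ≤ min 1 |a - b| := by
    refine le_min (by linarith [Real.exp_pos (-(b - a))]) ?_
    rw [abs_sub_comm, abs_of_nonneg (sub_nonneg.2 hab)]
    linarith [Real.one_sub_le_exp_neg (b - a)]
  gcongr

lemma exists_finset_forall_abs_sub_sum_le {E : Type*} [MetricSpace E] {K : Set E}
    (hK : IsCompact K) {δ : ℝ} (hδ : 0 < δ) :
    ∃ (t : Finset E) (χ : t → C(E, ℝ)),
      ∀ (φ : E → ℝ) (c : ℝ), (∀ y ∈ K, ∀ z ∈ K, dist y z < δ → |φ y - φ z| ≤ c) →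
        ∀ y ∈ K, |φ y - ∑ z, χ z y * φ z| ≤ c := by
  obtain ⟨t, htK, ht, hKt⟩ := hK.finite_cover_balls hδ
  lift t to Finset E using ht
  obtain ⟨χ, hχ⟩ := PartitionOfUnity.exists_isSubordinate hK.isClosed
    (fun z : t ↦ Metric.ball (z : E) δ) (fun _ ↦ Metric.isOpen_ball)
    (by simpa [iUnion_subtype] using hKt)
  refine ⟨t, χ, fun φ c hφ y hy ↦ ?_⟩
  have hsum : ∑ z, χ z y = 1 := by rw [← finsum_eq_sum_of_fintype, χ.sum_eq_one hy]
  have hterm (z : t) : |χ z y * (φ y - φ z)| ≤ χ z y * c := by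
    rw [abs_mul, abs_of_nonneg (χ.nonneg z y)]
    by_cases hz : χ z y = 0
    · simp [hz]
    · exact mul_le_mul_of_nonneg_left
        (hφ y hy z (htK z.2) (hχ z (subset_tsupport _ hz))) (χ.nonneg z y)
  calc |φ y - ∑ z, χ z y * φ z|
      = |∑ z, χ z y * (φ y - φ z)| := by
        simp_rw [mul_sub, Finset.sum_sub_distrib, ← Finset.sum_mul, hsum, one_mul]
    _ ≤ ∑ z, χ z y * c :=
        (Finset.abs_sum_le_sum_abs _ _).trans (Finset.sum_le_sum fun z _ ↦ hterm z)
    _ = c := by rw [← Finset.sum_mul, hsum, one_mul]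

section InnerApprox

variable {E : Type*} [TopologicalSpace E] [HasOuterApproxClosed E] {U : Set E}

/-- A sequence of continuous functions with values in `[0, 1]` that vanish off the open set `U` and
converge pointwise to its indicator. -/
def innerApprox (hU : IsOpen U) (n : ℕ) (x : E) : ℝ :=
  1 - (hU.isClosed_compl.apprSeq n x : ℝ)

lemma continuous_innerApprox (hU : IsOpen U) (n : ℕ) : Continuous (innerApprox hU n) := by
  unfold innerApprox
  fun_prop

lemma innerApprox_nonneg (hU : IsOpen U) (n : ℕ) : 0 ≤ innerApprox hU n := fun x ↦
  sub_nonneg.2 (mod_cast HasOuterApproxClosed.apprSeq_apply_le_one hU.isClosed_compl n x)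

lemma innerApprox_le_one (hU : IsOpen U) (n : ℕ) (x : E) : innerApprox hU n x ≤ 1 :=
  sub_le_self _ (NNReal.coe_nonneg _)

lemma innerApprox_eq_zero (hU : IsOpen U) (n : ℕ) {x : E} (hx : x ∉ U) :
    innerApprox hU n x = 0 := by
  simp [innerApprox, HasOuterApproxClosed.apprSeq_apply_eq_one hU.isClosed_compl n hx]

lemma tendsto_innerApprox (hU : IsOpen U) (x : E) :
    Tendsto (fun n ↦ innerApprox hU n x) atTop (𝓝 (U.indicator 1 x)) := by
  have h := tendsto_pi_nhds.1 (HasOuterApproxClosed.tendsto_apprSeq hU.isClosed_compl) x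
  have hind : U.indicator 1 x = 1 - ((Uᶜ.indicator (fun _ ↦ 1) x : NNReal) : ℝ) := by
    by_cases hx : x ∈ U <;> simp [hx]
  rw [hind]
  exact (NNReal.tendsto_coe.2 h).const_sub 1

lemma tendsto_integral_innerApprox [MeasurableSpace E] [OpensMeasurableSpace E] (hU : IsOpen U)
    {μ : Measure E} (hμ : μ U ≠ ∞) :
    Tendsto (fun n ↦ ∫ x, innerApprox hU n x ∂μ) atTop (𝓝 (μ.real U)) := by
  rw [← integral_indicator_one hU.measurableSet]
  refine tendsto_integral_of_dominated_convergence (U.indicator 1)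
    (fun n ↦ (continuous_innerApprox hU n).measurable.aestronglyMeasurable)
    ((integrable_indicator_iff hU.measurableSet).2 (integrableOn_const hμ))
    (fun n ↦ ae_of_all _ fun x ↦ ?_) (ae_of_all _ (tendsto_innerApprox hU))
  by_cases hx : x ∈ U
  · simpa [hx, abs_of_nonneg (innerApprox_nonneg hU n x)] using innerApprox_le_one hU n x
  · simp [hx, innerApprox_eq_zero hU n hx]

end InnerApprox

section TestFunction

variable {E : Type*} [TopologicalSpace E]

/-- The class `C_c⁺(E)` of nonnegative continuous functions with compact support. -/
structure IsTestFunction (f : E → ℝ) : Prop where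
  continuous : Continuous f
  hasCompactSupport : HasCompactSupport f
  nonneg : 0 ≤ f

namespace IsTestFunction

variable {f g : E → ℝ}

lemma zero : IsTestFunction (0 : E → ℝ) :=
  ⟨continuous_zero, .zero, le_rfl⟩

lemma add (hf : IsTestFunction f) (hg : IsTestFunction g) : IsTestFunction (f + g) :=
  ⟨hf.continuous.add hg.continuous, hf.hasCompactSupport.add hg.hasCompactSupport,
    add_nonneg hf.nonneg hg.nonneg⟩

variable [MeasurableSpace E] [OpensMeasurableSpace E]

lemma integrable (hf : IsTestFunction f) (ψ : Measure E) [IsFiniteMeasureOnCompacts ψ] :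
    Integrable f ψ :=
  hf.continuous.integrable_of_hasCompactSupport hf.hasCompactSupport

lemma abs_integral_sub_integral_le_mul (hf : IsTestFunction f) (hg : IsTestFunction g) {k : E → ℝ}
    (hk : IsTestFunction k) {η : ℝ} (h : ∀ x, |f x - g x| ≤ η * k x) (ψ : Measure E)
    [IsFiniteMeasureOnCompacts ψ] : |∫ x, f x ∂ψ - ∫ x, g x ∂ψ| ≤ η * ∫ x, k x ∂ψ := by
  rw [← integral_sub (hf.integrable ψ) (hg.integrable ψ), ← integral_const_mul]
  exact norm_integral_le_of_norm_le (f := fun x ↦ f x - g x) ((hk.integrable ψ).const_mul η)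
    (ae_of_all _ h)

end IsTestFunction

end TestFunction

section DeterminingFamily

variable {E : Type*} [TopologicalSpace E] [SecondCountableTopology E]

lemma isOpen_biInter_countableBasis (s : Finset (TopologicalSpace.countableBasis E)) :
    IsOpen (⋂ U ∈ s, (U : Set E)) :=
  isOpen_biInter_finset fun U _ ↦ TopologicalSpace.isOpen_of_mem_countableBasis U.2

lemma isPiSystem_range_biInter_countableBasis :
    IsPiSystem (range fun s : Finset (TopologicalSpace.countableBasis E) ↦
      ⋂ U ∈ s, (U : Set E)) := by
  classical
  rintro _ ⟨s, rfl⟩ _ ⟨s', rfl⟩ -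
  exact ⟨s ∪ s', Finset.iInf_union⟩

lemma generateFrom_range_biInter_countableBasis [MeasurableSpace E] [BorelSpace E] :
    ‹MeasurableSpace E› = .generateFrom
      (range fun s : Finset (TopologicalSpace.countableBasis E) ↦ ⋂ U ∈ s, (U : Set E)) := by
  refine le_antisymm ?_ (MeasurableSpace.generateFrom_le ?_)
  · rw [BorelSpace.measurable_eq (α := E),
      (TopologicalSpace.isBasis_countableBasis E).borel_eq_generateFrom]
    exact MeasurableSpace.generateFrom_mono fun U hU ↦ ⟨{⟨U, hU⟩}, by simp⟩
  · rintro _ ⟨s, rfl⟩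
    exact (isOpen_biInter_countableBasis s).measurableSet

variable (E) in
/-- Index type of the family `testFunction`: a finite set of basic open sets, the index of a member
of the compact exhaustion, and the index of an approximation from inside. -/
abbrev TestIndex : Type _ :=
  Finset (TopologicalSpace.countableBasis E) × ℕ × ℕ

variable [LocallyCompactSpace E]

/-- A countable family of relatively compact open sets that determines locally finite measures:
finite intersections of basic open sets, cut down to the interior of a member of a compact
exhaustion. -/
def testSet (s : Finset (TopologicalSpace.countableBasis E)) (k : ℕ) : Set E :=
  (⋂ U ∈ s, (U : Set E)) ∩ interior (CompactExhaustion.choice E k)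

lemma isOpen_testSet (s : Finset (TopologicalSpace.countableBasis E)) (k : ℕ) :
    IsOpen (testSet s k) :=
  (isOpen_biInter_countableBasis s).inter isOpen_interior

lemma testSet_subset (s : Finset (TopologicalSpace.countableBasis E)) (k : ℕ) :
    testSet s k ⊆ CompactExhaustion.choice E k :=
  inter_subset_right.trans interior_subset

lemma iUnion_interior_compactExhaustion :
    ⋃ k, interior (CompactExhaustion.choice E k : Set E) = univ :=
  eq_univ_of_forall fun x ↦ by
    obtain ⟨k, hk⟩ := (CompactExhaustion.choice E).exists_mem_nhds x
    exact mem_iUnion.2 ⟨k, mem_interior_iff_mem_nhds.2 hk⟩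

variable [T2Space E]

/-- A countable family of test functions whose integrals determine a locally finite measure. -/
def testFunction (i : TestIndex E) : E → ℝ :=
  innerApprox (isOpen_testSet i.1 i.2.1) i.2.2

lemma isTestFunction_testFunction (i : TestIndex E) :
    IsTestFunction (testFunction i) where
  continuous := continuous_innerApprox _ _
  hasCompactSupport := .intro ((CompactExhaustion.choice E).isCompact i.2.1) fun _ hx ↦
    innerApprox_eq_zero _ _ fun hx' ↦ hx (testSet_subset _ _ hx')
  nonneg := innerApprox_nonneg _ _

variable {β : Type*} [MeasurableSpace β] [MeasurableSpace E] [BorelSpace E]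

lemma measurable_measure_testSet {κ : β → Measure E} [∀ b, IsFiniteMeasureOnCompacts (κ b)]
    (h : ∀ i, Measurable fun b ↦ ∫ x, testFunction i x ∂κ b)
    (s : Finset (TopologicalSpace.countableBasis E)) (k : ℕ) :
    Measurable fun b ↦ κ b (testSet s k) := by
  have hfin (b : β) : κ b (testSet s k) ≠ ∞ :=
    ((measure_mono (testSet_subset s k)).trans_lt
      ((CompactExhaustion.choice E).isCompact k).measure_lt_top).ne
  have hreal : Measurable fun b ↦ (κ b).real (testSet s k) :=
    measurable_of_tendsto_metrizable (fun n ↦ h (s, k, n))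
      (tendsto_pi_nhds.2 fun b ↦ tendsto_integral_innerApprox (isOpen_testSet s k) (hfin b))
  simp_rw [← ofReal_measureReal (hfin _)]
  exact hreal.ennreal_ofReal

lemma measurable_of_measurable_integral_testFunction {κ : β → Measure E}
    [∀ b, IsFiniteMeasureOnCompacts (κ b)]
    (h : ∀ i, Measurable fun b ↦ ∫ x, testFunction i x ∂κ b) : Measurable κ := by
  let K := CompactExhaustion.choice E
  have hrestrict (k : ℕ) : Measurable fun b ↦ (κ b).restrict (interior (K k)) := by
    have (b : β) : IsFiniteMeasure ((κ b).restrict (interior (K k))) :=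
      ⟨by simpa using (measure_mono interior_subset).trans_lt (K.isCompact k).measure_lt_top⟩
    refine .measure_of_isPiSystem generateFrom_range_biInter_countableBasis
      isPiSystem_range_biInter_countableBasis ?_ ?_
    · rintro _ ⟨s, rfl⟩
      simp_rw [Measure.restrict_apply (isOpen_biInter_countableBasis s).measurableSet]
      exact measurable_measure_testSet h s k
    · simpa [testSet] using measurable_measure_testSet h ∅ k
  refine Measure.measurable_of_measurable_coe _ fun s hs ↦ ?_
  have hsup (b : β) : κ b s = ⨆ k, (κ b).restrict (interior (K k)) s := by
    have hmono : Monotone fun k ↦ s ∩ interior (K k) := fun k k' hk ↦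
      inter_subset_inter_right s (interior_mono (K.subset hk))
    simp_rw [Measure.restrict_apply hs]
    rw [← hmono.measure_iUnion, ← inter_iUnion, iUnion_interior_compactExhaustion, inter_univ]
  simp_rw [hsup]
  exact .iSup fun k ↦ (Measure.measurable_coe hs).comp (hrestrict k)

end DeterminingFamily

section LocallyFinite

variable {E : Type*} [TopologicalSpace E] [MeasurableSpace E]

open scoped Classical in
/-- The measure `ψ` if it is finite on compact sets, and `0` otherwise. It makes the evaluation
`ψ ↦ ψ` an s-finite kernel on the space of all measures. -/
def locallyFinitePart (ψ : Measure E) : Measure E :=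
  if IsFiniteMeasureOnCompacts ψ then ψ else 0

lemma locallyFinitePart_eq_self (ψ : Measure E) [IsFiniteMeasureOnCompacts ψ] :
    locallyFinitePart ψ = ψ :=
  if_pos ‹_›

instance isFiniteMeasureOnCompacts_locallyFinitePart (ψ : Measure E) :
    IsFiniteMeasureOnCompacts (locallyFinitePart ψ) := by
  unfold locallyFinitePart
  split_ifs with h
  · exact h
  · exact ⟨fun K _ ↦ by simp⟩

variable [LocallyCompactSpace E] [T2Space E] [SecondCountableTopology E] [BorelSpace E]

lemma measurableSet_isFiniteMeasureOnCompacts :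
    MeasurableSet {ψ : Measure E | IsFiniteMeasureOnCompacts ψ} := by
  let K := CompactExhaustion.choice E
  have h : {ψ : Measure E | IsFiniteMeasureOnCompacts ψ} = ⋂ n, {ψ | ψ (K n) < ∞} := by
    refine Subset.antisymm (fun ψ (hψ : IsFiniteMeasureOnCompacts ψ) ↦ ?_) fun ψ hψ ↦ ⟨?_⟩
    · exact mem_iInter.2 fun n ↦ (K.isCompact n).measure_lt_top
    · intro s hs
      obtain ⟨n, hn⟩ := K.exists_superset_of_isCompact hs
      exact (measure_mono hn).trans_lt (mem_iInter.1 hψ n)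
  rw [h]
  exact .iInter fun n ↦
    measurableSet_lt (Measure.measurable_coe (K.isCompact n).measurableSet) measurable_const

lemma measurable_locallyFinitePart : Measurable (locallyFinitePart (E := E)) := by
  classical
  exact .ite measurableSet_isFiniteMeasureOnCompacts measurable_id measurable_const

variable (E) in
/-- The kernel `ψ ↦ ψ` on the locally finite measures, extended by `0`. -/
def locallyFiniteKernel : Kernel (Measure E) E :=
  ⟨locallyFinitePart, measurable_locallyFinitePart⟩

lemma locallyFiniteKernel_apply (ψ : Measure E) :
    locallyFiniteKernel E ψ = locallyFinitePart ψ :=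
  rfl

instance isSFiniteKernel_locallyFiniteKernel : IsSFiniteKernel (locallyFiniteKernel E) := by
  let K := CompactExhaustion.choice E
  exact isSFiniteKernel_of_iUnion_eq_univ _ (fun n ↦ (K.isCompact n).measurableSet) K.iUnion_eq
    fun ψ n ↦ (K.isCompact n).measure_lt_top (μ := locallyFinitePart ψ)

end LocallyFinite

section LaplaceWeight

variable {E F : Type*} [MeasurableSpace E]

/-- The function `(ψ, y) ↦ e^{-∫ f dψ} w(y)`. -/
def laplaceWeight (f : E → ℝ) (w : F → ℝ) (p : Measure E × F) : ℝ :=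
  Real.exp (-∫ x, f x ∂p.1) * w p.2

lemma measurable_laplaceWeight [MeasurableSpace F] {f : E → ℝ} (hf : Measurable f) {w : F → ℝ}
    (hw : Measurable w) : Measurable (laplaceWeight f w) :=
  (((measurable_integral_measure hf).comp measurable_fst).neg.exp).mul (hw.comp measurable_snd)

variable [TopologicalSpace E] [OpensMeasurableSpace E] {f g : E → ℝ}

lemma laplaceWeight_mul (hf : IsTestFunction f) (hg : IsTestFunction g) (v w : F → ℝ)
    (p : Measure E × F) [IsFiniteMeasureOnCompacts p.1] :
    laplaceWeight f v p * laplaceWeight g w p = laplaceWeight (f + g) (v * w) p := by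
  simp only [laplaceWeight, Pi.add_apply, Pi.mul_apply]
  rw [integral_add (hf.integrable p.1) (hg.integrable p.1), neg_add, Real.exp_add]
  ring

end LaplaceWeight

section Uniqueness

variable {E F : Type*} [TopologicalSpace E] [LocallyCompactSpace E] [T2Space E]
  [SecondCountableTopology E] [MeasurableSpace E] [BorelSpace E]

/-- The coordinates `(∫ u dψ)_u`, for `u` in the countable determining family, of the locally finite
part of `ψ`, together with `y`. They embed the locally finite measures into a Polish space. -/
def testCoordinates (p : Measure E × F) :
    (TestIndex E → NNReal) × F :=
  (fun i ↦ ⟨∫ x, testFunction i x ∂locallyFinitePart p.1,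
    integral_nonneg (isTestFunction_testFunction i).nonneg⟩, p.2)

section Measurable

variable [MeasurableSpace F]

lemma measurable_testCoordinates : Measurable (testCoordinates (E := E) (F := F)) := by
  refine (measurable_pi_lambda _ fun i ↦ Measurable.subtype_mk ?_).prodMk measurable_snd
  exact (measurable_integral_measure (isTestFunction_testFunction i).continuous.measurable).comp
    (measurable_locallyFinitePart.comp measurable_fst)

lemma exists_testCoordinates_preimage_eq {s : Set (Measure E × F)} (hs : MeasurableSet s) :
    ∃ t, MeasurableSet t ∧
      testCoordinates ⁻¹' t = (fun p : Measure E × F ↦ (locallyFinitePart p.1, p.2)) ⁻¹' s := by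
  let m : MeasurableSpace (Measure E × F) := .comap testCoordinates inferInstance
  have hcoord : Measurable[m] (testCoordinates (E := E) (F := F)) := comap_measurable _
  have hfst : Measurable[m] fun p : Measure E × F ↦ locallyFinitePart p.1 :=
    measurable_of_measurable_integral_testFunction fun i ↦
      measurable_subtype_coe.comp ((measurable_pi_apply i).comp (measurable_fst.comp hcoord))
  have hsnd : Measurable[m] fun p : Measure E × F ↦ (testCoordinates p).2 :=
    measurable_snd.comp hcoord
  exact hfst.prodMk hsnd hs

lemma measure_eq_of_map_testCoordinates_eq {μ ν : Measure (Measure E × F)}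
    (hμ : ∀ᵐ p ∂μ, IsFiniteMeasureOnCompacts p.1) (hν : ∀ᵐ p ∂ν, IsFiniteMeasureOnCompacts p.1)
    (h : μ.map testCoordinates = ν.map testCoordinates) : μ = ν := by
  ext s hs
  obtain ⟨t, ht, hts⟩ := exists_testCoordinates_preimage_eq hs
  have apply_eq {ρ : Measure (Measure E × F)} (hρ : ∀ᵐ p ∂ρ, IsFiniteMeasureOnCompacts p.1) :
      ρ.map testCoordinates t = ρ s := by
    rw [Measure.map_apply measurable_testCoordinates ht, hts]
    refine measure_congr ?_
    filter_upwards [hρ] with p hp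
    change s (locallyFinitePart p.1, p.2) = s p
    rw [locallyFinitePart_eq_self]
  rw [← apply_eq hμ, ← apply_eq hν, h]

end Measurable

variable [TopologicalSpace F]

variable (E F) in
/-- The bounded continuous functions of the test coordinates that restrict to a function
`laplaceWeight f w` on the locally finite measures. -/
def laplaceSubmonoid :
    Submonoid ((TestIndex E → NNReal) × F →ᵇ ℝ) where
  carrier := {e | ∃ (f : E → ℝ) (w : F →ᵇ ℝ), IsTestFunction f ∧
    ∀ p : Measure E × F, IsFiniteMeasureOnCompacts p.1 →
      e (testCoordinates p) = laplaceWeight f w p}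
  one_mem' := ⟨0, 1, .zero, fun p _ ↦ by simp [laplaceWeight]⟩
  mul_mem' := by
    rintro e e' ⟨f, w, hf, he⟩ ⟨f', w', hf', he'⟩
    refine ⟨f + f', w * w', hf.add hf', fun p hp ↦ ?_⟩
    rw [BoundedContinuousFunction.mul_apply, he p hp, he' p hp, laplaceWeight_mul hf hf']
    rfl

lemma exists_mem_laplaceSubmonoid_ne [NormalSpace F] [T1Space F]
    {a b : (TestIndex E → NNReal) × F} (hab : a ≠ b) :
    ∃ e ∈ laplaceSubmonoid E F, e a ≠ e b := by
  by_cases hsnd : a.2 = b.2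
  · obtain ⟨i, hi⟩ := Function.ne_iff.1 fun hfst ↦ hab (Prod.ext hfst hsnd)
    let e : (TestIndex E → NNReal) × F →ᵇ ℝ :=
      .ofNormedAddCommGroup (fun q ↦ Real.exp (-q.1 i)) (by fun_prop) 1 fun q ↦ by
        rw [Real.norm_of_nonneg (Real.exp_pos _).le]
        exact Real.exp_le_one_iff.2 (neg_nonpos.2 (q.1 i).2)
    refine ⟨e, ⟨testFunction i, 1, isTestFunction_testFunction i, fun p hp ↦ ?_⟩, ?_⟩
    · have he : e (testCoordinates p) =
          Real.exp (-∫ x, testFunction i x ∂locallyFinitePart p.1) := rfl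
      simp [he, laplaceWeight, locallyFinitePart_eq_self]
    · simpa [e] using hi
  · obtain ⟨w, hwa, hwb, -⟩ := exists_bounded_zero_one_of_closed isClosed_singleton
      isClosed_singleton (disjoint_singleton.2 hsnd)
    refine ⟨w.compContinuous ⟨Prod.snd, continuous_snd⟩,
      ⟨0, w, .zero, fun p _ ↦ by simp [testCoordinates, laplaceWeight]⟩, ?_⟩
    simp [hwa rfl, hwb rfl]

variable [PolishSpace F] [MeasurableSpace F] [BorelSpace F]

lemma measure_ext_of_integral_laplaceWeight_eq {μ ν : Measure (Measure E × F)}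
    [IsFiniteMeasure μ] [IsFiniteMeasure ν] (hμ : ∀ᵐ p ∂μ, IsFiniteMeasureOnCompacts p.1)
    (hν : ∀ᵐ p ∂ν, IsFiniteMeasureOnCompacts p.1)
    (h : ∀ (f : E → ℝ) (w : F →ᵇ ℝ), IsTestFunction f →
      ∫ p, laplaceWeight f w p ∂μ = ∫ p, laplaceWeight f w p ∂ν) : μ = ν := by
  refine measure_eq_of_map_testCoordinates_eq hμ hν <|
    measure_ext_of_forall_mem_submonoid_integral_eq (S := laplaceSubmonoid E F)
      (fun _ _ ↦ exists_mem_laplaceSubmonoid_ne) ?_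
  rintro e ⟨f, w, hf, he⟩
  have integral_eq {ρ : Measure (Measure E × F)} (hρ : ∀ᵐ p ∂ρ, IsFiniteMeasureOnCompacts p.1) :
      ∫ q, e q ∂ρ.map testCoordinates = ∫ p, laplaceWeight f w p ∂ρ := by
    rw [integral_map measurable_testCoordinates.aemeasurable
      e.continuous.measurable.aestronglyMeasurable]
    exact integral_congr_ae (hρ.mono he)
  rw [integral_eq hμ, integral_eq hν, h f w hf]

end Uniqueness

section Campbell

variable {E : Type*} [TopologicalSpace E] [LocallyCompactSpace E] [T2Space E]
  [SecondCountableTopology E] [MeasurableSpace E] [BorelSpace E] {Q : Measure (Measure E)}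

/-- The Campbell measure `E[∫ 1{(Ψ, y) ∈ ·} dΨ(y)]` of a random locally finite measure `Ψ` with
law `Q`. -/
def campbell (Q : Measure (Measure E)) : Measure (Measure E × E) :=
  Q ⊗ₘ locallyFiniteKernel E

lemma lintegral_campbell [SFinite Q] (hQ : ∀ᵐ ψ ∂Q, IsFiniteMeasureOnCompacts ψ)
    {F : Measure E × E → ℝ≥0∞} (hF : Measurable F) :
    ∫⁻ p, F p ∂campbell Q = ∫⁻ ψ, ∫⁻ y, F (ψ, y) ∂ψ ∂Q := by
  rw [campbell, Measure.lintegral_compProd hF]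
  refine lintegral_congr_ae ?_
  filter_upwards [hQ] with ψ hψ
  rw [locallyFiniteKernel_apply, locallyFinitePart_eq_self]

lemma ae_campbell [SFinite Q] (hQ : ∀ᵐ ψ ∂Q, IsFiniteMeasureOnCompacts ψ) :
    ∀ᵐ p ∂campbell Q, IsFiniteMeasureOnCompacts p.1 := by
  refine (Measure.ae_compProd_iff
    (measurable_fst measurableSet_isFiniteMeasureOnCompacts)).2 ?_
  filter_upwards [hQ] with ψ hψ
  exact ae_of_all _ fun _ ↦ hψ

lemma integrable_campbell [IsFiniteMeasure Q] (hQ : ∀ᵐ ψ ∂Q, IsFiniteMeasureOnCompacts ψ)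
    {F : Measure E × E → ℝ} (hF : Measurable F)
    (hint : ∀ ψ, IsFiniteMeasureOnCompacts ψ → Integrable (fun y ↦ F (ψ, y)) ψ) {C : ℝ}
    (hC : ∀ ψ, IsFiniteMeasureOnCompacts ψ → ∫ y, |F (ψ, y)| ∂ψ ≤ C) :
    Integrable F (campbell Q) := by
  refine (Measure.integrable_compProd_iff hF.aestronglyMeasurable).2 ⟨?_, ?_⟩
  · filter_upwards [hQ] with ψ hψ
    rw [locallyFiniteKernel_apply, locallyFinitePart_eq_self]
    exact hint ψ hψ
  · refine .of_bound
      hF.norm.stronglyMeasurable.integral_kernel_prod_right'.aestronglyMeasurable C ?_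
    filter_upwards [hQ] with ψ hψ
    rw [Real.norm_of_nonneg (integral_nonneg fun _ ↦ norm_nonneg _), locallyFiniteKernel_apply,
      locallyFinitePart_eq_self]
    exact hC ψ hψ

lemma TendstoInLaw.tendsto_integral_campbell [TopologicalSpace (Measure E)] {ι : Type*}
    {Q : ι → Measure (Measure E)} {l : Filter ι} {Q' : Measure (Measure E)}
    [∀ i, IsFiniteMeasure (Q i)] [IsFiniteMeasure Q'] (hQQ' : TendstoInLaw Q l Q')
    (hQ : ∀ i, ∀ᵐ ψ ∂Q i, IsFiniteMeasureOnCompacts ψ)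
    (hQ' : ∀ᵐ ψ ∂Q', IsFiniteMeasureOnCompacts ψ)
    {F : Measure E × E → ℝ} (hF : Measurable F)
    (hint : ∀ ψ, IsFiniteMeasureOnCompacts ψ → Integrable (fun y ↦ F (ψ, y)) ψ) {C : ℝ}
    (hC0 : 0 ≤ C) (hC : ∀ ψ, IsFiniteMeasureOnCompacts ψ → ∫ y, |F (ψ, y)| ∂ψ ≤ C)
    {V : Measure E → ℝ} (hV : Continuous V) (hVm : Measurable V) (hV0 : 0 ≤ V)
    (h : ∀ η > 0, ∃ G : Measure E → ℝ, Continuous G ∧ Measurable G ∧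
      ∀ ψ, IsFiniteMeasureOnCompacts ψ → |∫ y, F (ψ, y) ∂ψ - G ψ| ≤ C * min 1 (η * V ψ)) :
    Tendsto (fun i ↦ ∫ p, F p ∂campbell (Q i)) l (𝓝 (∫ p, F p ∂campbell Q')) := by
  let H (ψ : Measure E) : ℝ := ∫ y, F (ψ, y) ∂locallyFiniteKernel E ψ
  have hH : Measurable H := hF.stronglyMeasurable.integral_kernel_prod_right'.measurable
  have H_eq (ψ : Measure E) (_ : IsFiniteMeasureOnCompacts ψ) : H ψ = ∫ y, F (ψ, y) ∂ψ := by
    simp only [H, locallyFiniteKernel_apply, locallyFinitePart_eq_self]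
  have integral_campbell {Q : Measure (Measure E)} [IsFiniteMeasure Q]
      (hQ : ∀ᵐ ψ ∂Q, IsFiniteMeasureOnCompacts ψ) : ∫ p, F p ∂campbell Q = ∫ ψ, H ψ ∂Q :=
    Measure.integral_compProd (integrable_campbell hQ hF hint hC)
  simp_rw [integral_campbell hQ', integral_campbell (hQ _)]
  refine hQQ'.tendsto_integral_of_forall_exists_abs_sub_le_min hQ hQ' hC0 hH (fun ψ hψ ↦ ?_) hV hVm
    hV0 fun η hη ↦ ?_
  · rw [H_eq ψ hψ]
    exact abs_integral_le_integral_abs.trans (hC ψ hψ)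
  · obtain ⟨G, hG, hGm, hFG⟩ := h η hη
    exact ⟨G, hG, hGm, fun ψ hψ ↦ H_eq ψ hψ ▸ hFG ψ hψ⟩

end Campbell

section Shift

variable {d : ℕ}

lemma bddFinite_iff_isFiniteMeasureOnCompacts {ψ : Measure (Vec d)} :
    BddFinite ψ ↔ IsFiniteMeasureOnCompacts ψ :=
  ⟨fun h ↦ ⟨fun K hK ↦ h K hK.isBounded⟩, fun _ _ hs ↦
    (measure_mono subset_closure).trans_lt hs.isCompact_closure.measure_lt_top⟩

lemma shiftM_shiftM (s t : Vec d) (ψ : Measure (Vec d)) :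
    shiftM s (shiftM t ψ) = shiftM (t + s) ψ := by
  simp only [shiftM]
  rw [Measure.map_map (measurable_sub_const s) (measurable_sub_const t)]
  congr 1
  ext1 x
  exact sub_sub x t s

lemma shiftM_zero_left (ψ : Measure (Vec d)) : shiftM 0 ψ = ψ := by
  simp [shiftM]

lemma integral_shiftM (t : Vec d) (ψ : Measure (Vec d)) (f : Vec d → ℝ) :
    ∫ x, f x ∂shiftM t ψ = ∫ x, f (x - t) ∂ψ :=
  integral_map_equiv (MeasurableEquiv.subRight t) f

instance isFiniteMeasureOnCompacts_shiftM (t : Vec d) (ψ : Measure (Vec d))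
    [IsFiniteMeasureOnCompacts ψ] : IsFiniteMeasureOnCompacts (shiftM t ψ) :=
  Measure.IsFiniteMeasureOnCompacts.map ψ (Homeomorph.subRight t)

lemma locallyFinitePart_shiftM (t : Vec d) (ψ : Measure (Vec d)) :
    locallyFinitePart (shiftM t ψ) = shiftM t (locallyFinitePart ψ) := by
  by_cases hψ : IsFiniteMeasureOnCompacts ψ
  · rw [locallyFinitePart_eq_self, locallyFinitePart_eq_self]
  · have hshift : ¬ IsFiniteMeasureOnCompacts (shiftM t ψ) := fun h ↦ hψ <| by
      have := isFiniteMeasureOnCompacts_shiftM (-t) (shiftM t ψ)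
      rwa [shiftM_shiftM, add_neg_cancel, shiftM_zero_left] at this
    rw [locallyFinitePart, if_neg hshift, locallyFinitePart, if_neg hψ, shiftM, Measure.map_zero]

lemma measurable_shiftM_locallyFinitePart :
    Measurable fun p : Measure (Vec d) × Vec d ↦ shiftM p.2 (locallyFinitePart p.1) := by
  refine Measure.measurable_of_measurable_coe _ fun s hs ↦ ?_
  have hset : MeasurableSet {q : (Measure (Vec d) × Vec d) × Vec d | q.2 - q.1.2 ∈ s} :=
    (measurable_snd.sub (measurable_snd.comp measurable_fst)) hs
  have h := Kernel.measurable_kernel_prodMk_left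
    (κ := (locallyFiniteKernel (Vec d)).prodMkRight (Vec d)) hset
  refine (congrArg Measurable (funext fun p ↦ ?_)).mpr h
  rw [shiftM, Measure.map_apply (measurable_sub_const p.2) hs]
  rfl

/-- The involution `(ψ, y) ↦ (T_y ψ, -y)` that moves the point `y` to the origin and the origin
to `-y`. The locally finite part is taken for the sake of measurability. -/
def recenter (p : Measure (Vec d) × Vec d) : Measure (Vec d) × Vec d :=
  (shiftM p.2 (locallyFinitePart p.1), -p.2)

lemma measurable_recenter : Measurable (recenter (d := d)) :=
  measurable_shiftM_locallyFinitePart.prodMk measurable_snd.neg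

lemma isFiniteMeasureOnCompacts_recenter_fst (p : Measure (Vec d) × Vec d) :
    IsFiniteMeasureOnCompacts (recenter p).1 :=
  isFiniteMeasureOnCompacts_shiftM p.2 (locallyFinitePart p.1)

lemma MassStationaryLaw.measurePreserving_recenter {Q : Measure (Measure (Vec d))} [SFinite Q]
    (hQ : ∀ᵐ ψ ∂Q, IsFiniteMeasureOnCompacts ψ) (h : MassStationaryLaw Q) :
    MeasurePreserving recenter (campbell Q) (campbell Q) := by
  refine ⟨measurable_recenter, Measure.ext_of_lintegral _ fun F hF ↦ ?_⟩
  rw [lintegral_map hF measurable_recenter, lintegral_campbell hQ hF]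
  refine (lintegral_campbell hQ (hF.comp measurable_recenter)).trans ?_
  let g (ψ : Measure (Vec d)) (x y : Vec d) : ℝ≥0∞ := F (shiftM x (locallyFinitePart ψ), y - x)
  have hg : Measurable fun p : Measure (Vec d) × Vec d × Vec d ↦ g p.1 p.2.1 p.2.2 :=
    hF.comp ((measurable_shiftM_locallyFinitePart.comp
      (measurable_fst.prodMk (measurable_fst.comp measurable_snd))).prodMk
        ((measurable_snd.comp measurable_snd).sub (measurable_fst.comp measurable_snd)))
  have hcov : Covariant3 g := fun t x y ψ ↦ by
    simp only [g, locallyFinitePart_shiftM, shiftM_shiftM, add_sub_cancel, sub_sub_sub_cancel_right]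
  have hmtp := h g hg hcov
  simp only [g, shiftM_zero_left, sub_zero, zero_sub] at hmtp
  refine hmtp.symm.trans (lintegral_congr_ae ?_)
  filter_upwards [hQ] with ψ hψ
  rw [locallyFinitePart_eq_self]

lemma massStationaryLaw_of_measurePreserving_recenter {Q : Measure (Measure (Vec d))} [SFinite Q]
    (hQ : ∀ᵐ ψ ∂Q, IsFiniteMeasureOnCompacts ψ)
    (h : MeasurePreserving recenter (campbell Q) (campbell Q)) : MassStationaryLaw Q := by
  intro g hg hcov
  have hF : Measurable fun p : Measure (Vec d) × Vec d ↦ g p.1 0 p.2 :=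
    hg.comp (measurable_fst.prodMk (measurable_const.prodMk measurable_snd))
  have hF_recenter {ψ : Measure (Vec d)} [IsFiniteMeasureOnCompacts ψ] (y : Vec d) :
      g (recenter (ψ, y)).1 0 (recenter (ψ, y)).2 = g ψ y 0 := by
    simpa [recenter, locallyFinitePart_eq_self] using hcov y y 0 ψ
  rw [← lintegral_campbell hQ hF, ← h.lintegral_comp hF]
  refine (lintegral_campbell hQ (hF.comp measurable_recenter)).trans (lintegral_congr_ae ?_)
  filter_upwards [hQ] with ψ hψ
  exact lintegral_congr hF_recenter

end Shift

section ExpBound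

variable {E : Type*} [MeasurableSpace E] {ψ : Measure E} {s : Set E} {u : E → ℝ} {c : ℝ}

lemma integrable_of_abs_le_exp_neg_measureReal (hs : MeasurableSet s) (hψs : ψ s ≠ ∞)
    (hu : Measurable u) (hus : ∀ y ∈ s, |u y| ≤ Real.exp (-ψ.real s) * c)
    (hus' : ∀ y ∉ s, u y = 0) : Integrable u ψ :=
  (integrableOn_iff_integrable_of_support_subset fun y hy ↦ by_contra fun h ↦ hy (hus' y h)).1 <|
    .of_bound hψs.lt_top hu.aestronglyMeasurable _ (ae_restrict_of_forall_mem hs hus)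

lemma integral_abs_le_of_abs_le_exp_neg_measureReal (hψs : ψ s ≠ ∞) (hc : 0 ≤ c)
    (hus : ∀ y ∈ s, |u y| ≤ Real.exp (-ψ.real s) * c) (hus' : ∀ y ∉ s, u y = 0) :
    ∫ y, |u y| ∂ψ ≤ c := by
  have hmass : ψ.real s * Real.exp (-ψ.real s) ≤ 1 :=
    (Real.mul_exp_neg_le_exp_neg_one _).trans (Real.exp_le_one_iff.2 (by norm_num))
  calc ∫ y, |u y| ∂ψ
      = ∫ y in s, |u y| ∂ψ :=
        (setIntegral_eq_integral_of_forall_compl_eq_zero fun y hy ↦ by simp [hus' y hy]).symm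
    _ ≤ (Real.exp (-ψ.real s) * c) * ψ.real s :=
        (Real.le_norm_self _).trans <| norm_setIntegral_le_of_norm_le_const hψs.lt_top fun y hy ↦
          (norm_norm (u y)).trans_le (hus y hy)
    _ = (ψ.real s * Real.exp (-ψ.real s)) * c := by ring
    _ ≤ c := mul_le_of_le_one_left hc hmass

end ExpBound

section ControlledPair

variable {d : ℕ}

/-- The cone function `x ↦ (r - ‖x‖)⁺`, a test function that is positive on the open ball of radius
`r` and at least `1` on the closed ball of radius `r - 1`. -/
def cone (r : ℝ) (x : Vec d) : ℝ := max 0 (r - ‖x‖)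

lemma cone_eq_zero {r : ℝ} {x : Vec d} (hx : r ≤ ‖x‖) : cone r x = 0 :=
  max_eq_left (by linarith)

lemma one_le_cone {r : ℝ} {x : Vec d} (hx : ‖x‖ ≤ r - 1) : 1 ≤ cone r x :=
  le_max_of_le_right (by linarith)

lemma cone_pos {r : ℝ} {x : Vec d} (hx : ‖x‖ < r) : 0 < cone r x :=
  lt_max_of_lt_right (by linarith)

lemma hasCompactSupport_of_norm {u : Vec d → ℝ} {r : ℝ} (hu : ∀ x, r < ‖x‖ → u x = 0) :
    HasCompactSupport u :=
  .intro (isCompact_closedBall 0 r) fun x hx ↦ hu x (by simpa using hx)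

lemma isTestFunction_cone (r : ℝ) : IsTestFunction (cone (d := d) r) where
  continuous := by unfold cone; fun_prop
  hasCompactSupport := hasCompactSupport_of_norm fun _ hx ↦ cone_eq_zero hx.le
  nonneg _ := le_max_left _ _

lemma IsTestFunction.comp_sub {f : Vec d → ℝ} (hf : IsTestFunction f) (y : Vec d) :
    IsTestFunction fun x ↦ f (x - y) where
  continuous := hf.continuous.comp (by fun_prop)
  hasCompactSupport := hf.hasCompactSupport.comp_homeomorph (Homeomorph.subRight y)
  nonneg x := hf.nonneg (x - y)

/-- A pair `(f, w)` for which `∫ |laplaceWeight f w (ψ, y)| dψ(y)` and its recentered analogue are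
bounded uniformly in `ψ`: the factor `e^{-∫ f dψ}` controls the mass that `ψ` or any of its shifts
by a point of the ball of radius `R` puts on the support of `w`. -/
structure IsControlledPair (R : ℝ) (f w : Vec d → ℝ) : Prop where
  isTestFunction : IsTestFunction f
  one_le : ∀ x, ‖x‖ ≤ 2 * R → 1 ≤ f x
  continuous : Continuous w
  eq_zero : ∀ x, R < ‖x‖ → w x = 0

lemma isControlledPair_cone (R : ℝ) :
    IsControlledPair R (cone (d := d) (2 * R + 1)) (cone R) where
  isTestFunction := isTestFunction_cone _
  one_le _ hx := one_le_cone (by linarith)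
  continuous := (isTestFunction_cone R).continuous
  eq_zero _ hx := cone_eq_zero hx.le

lemma laplaceWeight_recenter (f w : Vec d → ℝ) (ψ : Measure (Vec d)) [IsFiniteMeasureOnCompacts ψ]
    (y : Vec d) :
    laplaceWeight f w (recenter (ψ, y)) = Real.exp (-∫ x, f (x - y) ∂ψ) * w (-y) := by
  simp only [laplaceWeight, recenter, locallyFinitePart_eq_self, integral_shiftM]

namespace IsControlledPair

variable {R C : ℝ} {f w : Vec d → ℝ}

lemma add_mul (h : IsControlledPair R f w) {g v : Vec d → ℝ} (hg : IsTestFunction g)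
    (hv : Continuous v) : IsControlledPair R (f + g) (w * v) where
  isTestFunction := h.isTestFunction.add hg
  one_le x hx := le_add_of_le_of_nonneg (h.one_le x hx) (hg.nonneg x)
  continuous := h.continuous.mul hv
  eq_zero x hx := by simp [h.eq_zero x hx]

lemma hasCompactSupport (h : IsControlledPair R f w) : HasCompactSupport w :=
  hasCompactSupport_of_norm h.eq_zero

lemma exists_abs_le (h : IsControlledPair R f w) : ∃ C, 0 ≤ C ∧ ∀ x, |w x| ≤ C := by
  obtain ⟨C, hC⟩ := h.hasCompactSupport.exists_bound_of_continuous h.continuous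
  exact ⟨C, (abs_nonneg _).trans (hC 0), hC⟩

lemma measurable_laplaceWeight (h : IsControlledPair R f w) : Measurable (laplaceWeight f w) :=
  _root_.measurable_laplaceWeight h.isTestFunction.continuous.measurable h.continuous.measurable

lemma laplaceWeight_eq_zero (h : IsControlledPair R f w) {p : Measure (Vec d) × Vec d}
    (hp : R < ‖p.2‖) : laplaceWeight f w p = 0 := by
  rw [laplaceWeight, h.eq_zero _ hp, mul_zero]

section Bound

variable {ψ : Measure (Vec d)} [IsFiniteMeasureOnCompacts ψ]

lemma measureReal_closedBall_le_integral (h : IsControlledPair R f w) {y : Vec d} (hy : ‖y‖ ≤ R) :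
    ψ.real (Metric.closedBall 0 R) ≤ ∫ x, f (x - y) ∂ψ := by
  have hfy := h.isTestFunction.comp_sub y
  have hone (x : Vec d) (hx : x ∈ Metric.closedBall (0 : Vec d) R) : 1 ≤ f (x - y) :=
    h.one_le _ ((norm_sub_le x y).trans (by linarith [mem_closedBall_zero_iff.1 hx]))
  calc ψ.real (Metric.closedBall 0 R)
      = ∫ x in Metric.closedBall 0 R, 1 ∂ψ := by simp
    _ ≤ ∫ x in Metric.closedBall 0 R, f (x - y) ∂ψ :=
        setIntegral_mono_on (integrableOn_const (isCompact_closedBall 0 R).measure_ne_top)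
          (hfy.integrable ψ).integrableOn Metric.isClosed_closedBall.measurableSet hone
    _ ≤ ∫ x, f (x - y) ∂ψ :=
        setIntegral_le_integral (hfy.integrable ψ) (ae_of_all _ hfy.nonneg)

lemma abs_exp_neg_integral_mul_le (h : IsControlledPair R f w) {y : Vec d} (hy : ‖y‖ ≤ R) {b : ℝ}
    (hb : |b| ≤ C) :
    |Real.exp (-∫ x, f (x - y) ∂ψ) * b| ≤ Real.exp (-ψ.real (Metric.closedBall 0 R)) * C := by
  rw [abs_mul, Real.abs_exp]
  gcongr
  exact h.measureReal_closedBall_le_integral hy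

lemma abs_laplaceWeight_le (h : IsControlledPair R f w) (hC : ∀ x, |w x| ≤ C) {y : Vec d}
    (hy : ‖y‖ ≤ R) :
    |laplaceWeight f w (ψ, y)| ≤ Real.exp (-ψ.real (Metric.closedBall 0 R)) * C := by
  have h0 : ‖(0 : Vec d)‖ ≤ R := by simpa using (norm_nonneg y).trans hy
  have hbound := h.abs_exp_neg_integral_mul_le (ψ := ψ) h0 (hC y)
  simp only [sub_zero] at hbound
  exact hbound

lemma abs_laplaceWeight_recenter_le (h : IsControlledPair R f w) (hC : ∀ x, |w x| ≤ C) {y : Vec d}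
    (hy : ‖y‖ ≤ R) :
    |laplaceWeight f w (recenter (ψ, y))| ≤ Real.exp (-ψ.real (Metric.closedBall 0 R)) * C := by
  rw [laplaceWeight_recenter]
  exact h.abs_exp_neg_integral_mul_le hy (hC (-y))

lemma integrable_laplaceWeight (h : IsControlledPair R f w) :
    Integrable (fun y ↦ laplaceWeight f w (ψ, y)) ψ := by
  obtain ⟨C, -, hC⟩ := h.exists_abs_le
  exact integrable_of_abs_le_exp_neg_measureReal Metric.isClosed_closedBall.measurableSet
    (isCompact_closedBall 0 R).measure_ne_top
    (h.measurable_laplaceWeight.comp measurable_prodMk_left)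
    (fun y hy ↦ h.abs_laplaceWeight_le hC (mem_closedBall_zero_iff.1 hy))
    fun y hy ↦ h.laplaceWeight_eq_zero (by simpa using hy)

lemma integral_abs_laplaceWeight_le (h : IsControlledPair R f w) (hC0 : 0 ≤ C)
    (hC : ∀ x, |w x| ≤ C) : ∫ y, |laplaceWeight f w (ψ, y)| ∂ψ ≤ C :=
  integral_abs_le_of_abs_le_exp_neg_measureReal (isCompact_closedBall 0 R).measure_ne_top hC0
    (fun _ hy ↦ h.abs_laplaceWeight_le hC (mem_closedBall_zero_iff.1 hy))
    fun _ hy ↦ h.laplaceWeight_eq_zero (by simpa using hy)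

lemma integrable_laplaceWeight_recenter (h : IsControlledPair R f w) :
    Integrable (fun y ↦ laplaceWeight f w (recenter (ψ, y))) ψ := by
  obtain ⟨C, -, hC⟩ := h.exists_abs_le
  exact integrable_of_abs_le_exp_neg_measureReal Metric.isClosed_closedBall.measurableSet
    (isCompact_closedBall 0 R).measure_ne_top
    ((h.measurable_laplaceWeight.comp measurable_recenter).comp measurable_prodMk_left)
    (fun y hy ↦ h.abs_laplaceWeight_recenter_le hC (mem_closedBall_zero_iff.1 hy))
    fun y hy ↦ h.laplaceWeight_eq_zero (by simpa [recenter] using hy)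

lemma integral_abs_laplaceWeight_recenter_le (h : IsControlledPair R f w) (hC0 : 0 ≤ C)
    (hC : ∀ x, |w x| ≤ C) : ∫ y, |laplaceWeight f w (recenter (ψ, y))| ∂ψ ≤ C :=
  integral_abs_le_of_abs_le_exp_neg_measureReal (isCompact_closedBall 0 R).measure_ne_top hC0
    (fun _ hy ↦ h.abs_laplaceWeight_recenter_le hC (mem_closedBall_zero_iff.1 hy))
    fun _ hy ↦ h.laplaceWeight_eq_zero (by simpa [recenter] using hy)

end Bound

section Campbell

variable {Q : Measure (Measure (Vec d))} [IsFiniteMeasure Q]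

lemma integrable_laplaceWeight_campbell (h : IsControlledPair R f w)
    (hQ : ∀ᵐ ψ ∂Q, IsFiniteMeasureOnCompacts ψ) : Integrable (laplaceWeight f w) (campbell Q) := by
  obtain ⟨C, hC0, hC⟩ := h.exists_abs_le
  exact integrable_campbell hQ h.measurable_laplaceWeight (fun _ _ ↦ h.integrable_laplaceWeight)
    fun _ _ ↦ h.integral_abs_laplaceWeight_le hC0 hC

lemma integrable_laplaceWeight_map_recenter_campbell (h : IsControlledPair R f w)
    (hQ : ∀ᵐ ψ ∂Q, IsFiniteMeasureOnCompacts ψ) :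
    Integrable (laplaceWeight f w) ((campbell Q).map recenter) := by
  obtain ⟨C, hC0, hC⟩ := h.exists_abs_le
  rw [integrable_map_measure h.measurable_laplaceWeight.aestronglyMeasurable
    measurable_recenter.aemeasurable]
  exact integrable_campbell hQ (h.measurable_laplaceWeight.comp measurable_recenter)
    (fun _ _ ↦ h.integrable_laplaceWeight_recenter)
    fun _ _ ↦ h.integral_abs_laplaceWeight_recenter_le hC0 hC

end Campbell

end IsControlledPair

/-- The density `laplaceWeight (cone (2R+1)) (cone R)`, positive exactly on the points `(ψ, y)` with
`‖y‖ < R`. -/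
def coneDensity (R : ℝ) (p : Measure (Vec d) × Vec d) : ℝ≥0∞ :=
  .ofReal (laplaceWeight (cone (2 * R + 1)) (cone R) p)

lemma measurable_coneDensity (R : ℝ) : Measurable (coneDensity (d := d) R) :=
  (isControlledPair_cone R).measurable_laplaceWeight.ennreal_ofReal

lemma coneDensity_ne_zero {R : ℝ} {p : Measure (Vec d) × Vec d} (hp : ‖p.2‖ < R) :
    coneDensity R p ≠ 0 :=
  (ENNReal.ofReal_pos.2 (mul_pos (Real.exp_pos _) (cone_pos hp))).ne'

lemma integral_laplaceWeight_withDensity_coneDensity {μ : Measure (Measure (Vec d) × Vec d)}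
    (hμ : ∀ᵐ p ∂μ, IsFiniteMeasureOnCompacts p.1) (R : ℝ) {f : Vec d → ℝ} (hf : IsTestFunction f)
    (w : Vec d → ℝ) :
    ∫ p, laplaceWeight f w p ∂μ.withDensity (coneDensity R) =
      ∫ p, laplaceWeight (cone (2 * R + 1) + f) (cone R * w) p ∂μ := by
  rw [integral_withDensity_eq_integral_toReal_smul (measurable_coneDensity R)
    (ae_of_all _ fun _ ↦ ENNReal.ofReal_lt_top)]
  refine integral_congr_ae ?_
  filter_upwards [hμ] with p hp
  have hnonneg : 0 ≤ laplaceWeight (cone (2 * R + 1)) (cone R) p :=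
    mul_nonneg (Real.exp_pos _).le ((isTestFunction_cone R).nonneg p.2)
  rw [coneDensity, ENNReal.toReal_ofReal hnonneg, smul_eq_mul,
    laplaceWeight_mul (isTestFunction_cone _) hf]

lemma measure_ext_of_isControlledPair {μ ν : Measure (Measure (Vec d) × Vec d)}
    (hμ : ∀ᵐ p ∂μ, IsFiniteMeasureOnCompacts p.1) (hν : ∀ᵐ p ∂ν, IsFiniteMeasureOnCompacts p.1)
    (hμ_int : ∀ R f w, IsControlledPair R f w → Integrable (laplaceWeight f w) μ)
    (hν_int : ∀ R f w, IsControlledPair R f w → Integrable (laplaceWeight f w) ν)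
    (h : ∀ R f w, IsControlledPair R f w →
      ∫ p, laplaceWeight f w p ∂μ = ∫ p, laplaceWeight f w p ∂ν) : μ = ν := by
  refine measure_ext_of_forall_withDensity_eq (f := fun R : ℕ ↦ coneDensity (R : ℝ))
    (fun R ↦ measurable_coneDensity R) (fun _ _ ↦ ENNReal.ofReal_ne_top)
    (fun p ↦ (exists_nat_gt ‖p.2‖).imp fun _ ↦ coneDensity_ne_zero) fun R ↦ ?_
  have hcone := isControlledPair_cone (d := d) R
  have : IsFiniteMeasure (μ.withDensity (coneDensity (R : ℝ))) :=
    isFiniteMeasure_withDensity_ofReal (hμ_int _ _ _ hcone).2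
  have : IsFiniteMeasure (ν.withDensity (coneDensity (R : ℝ))) :=
    isFiniteMeasure_withDensity_ofReal (hν_int _ _ _ hcone).2
  refine measure_ext_of_integral_laplaceWeight_eq
    ((withDensity_absolutelyContinuous _ _).ae_le hμ)
    ((withDensity_absolutelyContinuous _ _).ae_le hν) fun f w hf ↦ ?_
  rw [integral_laplaceWeight_withDensity_coneDensity hμ R hf,
    integral_laplaceWeight_withDensity_coneDensity hν R hf]
  exact h R _ _ (hcone.add_mul hf w.continuous)

end ControlledPair

section VagueContinuity

variable {d : ℕ} {R C : ℝ} {f w : Vec d → ℝ}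

local instance : TopologicalSpace (Measure (Vec d)) := vagueTop d

lemma continuous_integral_vagueTop {u : Vec d → ℝ} (hu : Continuous u) (hu' : HasCompactSupport u) :
    Continuous fun ψ : Measure (Vec d) ↦ ∫ x, u x ∂ψ :=
  continuous_iff_le_induced.2 (iInf_le _ (⟨u, hu, hu'⟩ : {u // Continuous u ∧ HasCompactSupport u}))

lemma IsTestFunction.exists_abs_sub_le_mul_cone (hf : IsTestFunction f) {r : ℝ}
    (hr : ∀ x, r < ‖x‖ → f x = 0) (R : ℝ) {η : ℝ} (hη : 0 < η) :
    ∃ δ > 0, ∀ y z : Vec d, ‖y‖ ≤ R → ‖z‖ ≤ R → dist y z < δ →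
      ∀ x, |f (x - y) - f (x - z)| ≤ η * cone (r + R + 1) x := by
  obtain ⟨δ, hδ, hfδ⟩ := Metric.uniformContinuous_iff.1
    (hf.hasCompactSupport.uniformContinuous_of_continuous hf.continuous) η hη
  refine ⟨δ, hδ, fun y z hy hz hyz x ↦ ?_⟩
  obtain hx | hx := le_or_gt ‖x‖ (r + R)
  · have hfη : |f (x - y) - f (x - z)| < η := hfδ (by rwa [dist_sub_left])
    exact hfη.le.trans (le_mul_of_one_le_right hη.le (one_le_cone (by linarith)))
  · rw [hr (x - y) (by linarith [norm_sub_norm_le x y]),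
      hr (x - z) (by linarith [norm_sub_norm_le x z]), sub_zero, abs_zero]
    exact mul_nonneg hη.le ((isTestFunction_cone _).nonneg x)

namespace IsControlledPair

lemma abs_exp_neg_integral_sub_le (h : IsControlledPair R f w) {k : Vec d → ℝ}
    (hk : IsTestFunction k) {y z : Vec d} (hy : ‖y‖ ≤ R) (hz : ‖z‖ ≤ R) {η : ℝ}
    (hyz : ∀ x, |f (x - y) - f (x - z)| ≤ η * k x) (ψ : Measure (Vec d))
    [IsFiniteMeasureOnCompacts ψ] :
    |Real.exp (-∫ x, f (x - y) ∂ψ) - Real.exp (-∫ x, f (x - z) ∂ψ)| ≤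
      Real.exp (-ψ.real (Metric.closedBall 0 R)) * min 1 (η * ∫ x, k x ∂ψ) := by
  refine (abs_exp_neg_sub_exp_neg_le (h.measureReal_closedBall_le_integral hy)
    (h.measureReal_closedBall_le_integral hz)).trans ?_
  gcongr
  exact (h.isTestFunction.comp_sub y).abs_integral_sub_integral_le_mul
    (h.isTestFunction.comp_sub z) hk hyz ψ

end IsControlledPair

/-- The Riemann-sum approximation `∑ z, e^{-∫ f(x - z) dψ(x)} ∫ χ_z(y) w(-y) dψ(y)` of
`∫ laplaceWeight f w (recenter (ψ, y)) dψ(y)`, for weights `χ` summing to `1`. -/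
def recenterApprox (f w : Vec d → ℝ) {t : Finset (Vec d)} (χ : t → C(Vec d, ℝ))
    (ψ : Measure (Vec d)) : ℝ :=
  ∑ z : t, Real.exp (-∫ x, f (x - z) ∂ψ) * ∫ y, χ z y * w (-y) ∂ψ

namespace IsControlledPair

variable {t : Finset (Vec d)} (χ : t → C(Vec d, ℝ))

lemma continuous_mul_comp_neg (h : IsControlledPair R f w) (v : C(Vec d, ℝ)) :
    Continuous fun y ↦ v y * w (-y) :=
  v.continuous.mul (h.continuous.comp continuous_neg)

lemma hasCompactSupport_mul_comp_neg (h : IsControlledPair R f w) (v : C(Vec d, ℝ)) :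
    HasCompactSupport fun y ↦ v y * w (-y) :=
  hasCompactSupport_of_norm (r := R) fun y hy ↦ by rw [h.eq_zero (-y) (by rwa [norm_neg]), mul_zero]

lemma continuous_recenterApprox (h : IsControlledPair R f w) :
    Continuous (recenterApprox f w χ) := by
  refine continuous_finsetSum _ fun z _ ↦ ?_
  have hfz := h.isTestFunction.comp_sub z
  exact (continuous_integral_vagueTop hfz.continuous hfz.hasCompactSupport).neg.rexp.mul
    (continuous_integral_vagueTop (h.continuous_mul_comp_neg _)
      (h.hasCompactSupport_mul_comp_neg _))

lemma measurable_recenterApprox (h : IsControlledPair R f w) :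
    Measurable (recenterApprox f w χ) :=
  Finset.measurable_fun_sum _ fun z _ ↦ (measurable_integral_measure
    (h.isTestFunction.comp_sub z).continuous.measurable).neg.exp.mul
      (measurable_integral_measure (h.continuous_mul_comp_neg _).measurable)

lemma integral_laplaceWeight_recenter_sub_recenterApprox (h : IsControlledPair R f w)
    (ψ : Measure (Vec d)) [IsFiniteMeasureOnCompacts ψ] :
    ∫ y, laplaceWeight f w (recenter (ψ, y)) ∂ψ - recenterApprox f w χ ψ =
      ∫ y, (Real.exp (-∫ x, f (x - y) ∂ψ) - ∑ z : t, χ z y * Real.exp (-∫ x, f (x - z) ∂ψ)) *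
        w (-y) ∂ψ := by
  have hterm (z : t) :
      Integrable (fun y ↦ Real.exp (-∫ x, f (x - z) ∂ψ) * (χ z y * w (-y))) ψ :=
    ((h.continuous_mul_comp_neg (χ z)).integrable_of_hasCompactSupport
      (h.hasCompactSupport_mul_comp_neg (χ z))).const_mul _
  simp only [recenterApprox]
  simp_rw [← integral_const_mul]
  rw [← integral_finsetSum _ fun z _ ↦ hterm z, ← integral_sub h.integrable_laplaceWeight_recenter
    (integrable_finsetSum _ fun z _ ↦ hterm z)]
  refine integral_congr_ae (ae_of_all _ fun y ↦ ?_)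
  simp only [laplaceWeight_recenter, sub_mul, Finset.sum_mul]
  congr 1
  exact Finset.sum_congr rfl fun z _ ↦ by ring

lemma exists_abs_sub_recenterApprox_le (h : IsControlledPair R f w) (hC : ∀ x, |w x| ≤ C)
    (hC0 : 0 ≤ C) {r : ℝ} (hr : ∀ x, r < ‖x‖ → f x = 0) {η : ℝ} (hη : 0 < η) :
    ∃ (t : Finset (Vec d)) (χ : t → C(Vec d, ℝ)),
      ∀ ψ : Measure (Vec d), IsFiniteMeasureOnCompacts ψ →
        |∫ y, laplaceWeight f w (recenter (ψ, y)) ∂ψ - recenterApprox f w χ ψ| ≤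
          C * min 1 (η * ∫ x, cone (r + R + 1) x ∂ψ) := by
  have hcone := isTestFunction_cone (d := d) (r + R + 1)
  obtain ⟨δ, hδ, hfδ⟩ := h.isTestFunction.exists_abs_sub_le_mul_cone hr R hη
  obtain ⟨t, χ, hχ⟩ := exists_finset_forall_abs_sub_sum_le
    (isCompact_closedBall (0 : Vec d) R) hδ
  refine ⟨t, χ, fun ψ hψ ↦ ?_⟩
  have hmin : 0 ≤ min 1 (η * ∫ x, cone (r + R + 1) x ∂ψ) :=
    le_min zero_le_one (mul_nonneg hη.le (integral_nonneg hcone.nonneg))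
  have happrox := hχ (fun y ↦ Real.exp (-∫ x, f (x - y) ∂ψ)) _ fun y hy z hz hyz ↦
    h.abs_exp_neg_integral_sub_le hcone (mem_closedBall_zero_iff.1 hy)
      (mem_closedBall_zero_iff.1 hz)
      (hfδ y z (mem_closedBall_zero_iff.1 hy) (mem_closedBall_zero_iff.1 hz) hyz) ψ
  rw [h.integral_laplaceWeight_recenter_sub_recenterApprox]
  refine abs_integral_le_integral_abs.trans <| integral_abs_le_of_abs_le_exp_neg_measureReal
    (s := Metric.closedBall 0 R) (isCompact_closedBall 0 R).measure_ne_top (mul_nonneg hC0 hmin)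
    (fun y hy ↦ ?_) fun y hy ↦ ?_
  · rw [abs_mul, mul_comm C, ← mul_assoc]
    exact mul_le_mul (happrox y hy) (hC (-y)) (abs_nonneg _)
      (mul_nonneg (Real.exp_pos _).le hmin)
  · rw [h.eq_zero (-y) (by simpa using hy), mul_zero]

end IsControlledPair

section Limit

variable {ι : Type*} {Q : ι → Measure (Measure (Vec d))} {l : Filter ι}
  {Q' : Measure (Measure (Vec d))} [∀ i, IsFiniteMeasure (Q i)] [IsFiniteMeasure Q']

lemma IsControlledPair.tendsto_integral_laplaceWeight (h : IsControlledPair R f w)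
    (hQQ' : TendstoInLaw Q l Q') (hQ : ∀ i, ∀ᵐ ψ ∂Q i, IsFiniteMeasureOnCompacts ψ)
    (hQ' : ∀ᵐ ψ ∂Q', IsFiniteMeasureOnCompacts ψ) :
    Tendsto (fun i ↦ ∫ p, laplaceWeight f w p ∂campbell (Q i)) l
      (𝓝 (∫ p, laplaceWeight f w p ∂campbell Q')) := by
  obtain ⟨C, hC0, hC⟩ := h.exists_abs_le
  have hcont : Continuous fun ψ : Measure (Vec d) ↦ ∫ y, laplaceWeight f w (ψ, y) ∂ψ := by
    simp only [laplaceWeight, integral_const_mul]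
    exact (continuous_integral_vagueTop h.isTestFunction.continuous
      h.isTestFunction.hasCompactSupport).neg.rexp.mul
        (continuous_integral_vagueTop h.continuous h.hasCompactSupport)
  have hmeas : Measurable fun ψ : Measure (Vec d) ↦ ∫ y, laplaceWeight f w (ψ, y) ∂ψ := by
    simp only [laplaceWeight, integral_const_mul]
    exact (measurable_integral_measure h.isTestFunction.continuous.measurable).neg.exp.mul
      (measurable_integral_measure h.continuous.measurable)
  exact hQQ'.tendsto_integral_campbell hQ hQ' h.measurable_laplaceWeight
    (fun _ _ ↦ h.integrable_laplaceWeight) hC0 (fun _ _ ↦ h.integral_abs_laplaceWeight_le hC0 hC)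
    continuous_zero measurable_zero le_rfl fun η _ ↦ ⟨_, hcont, hmeas, fun ψ _ ↦ by simp⟩

lemma IsControlledPair.tendsto_integral_laplaceWeight_recenter (h : IsControlledPair R f w)
    (hQQ' : TendstoInLaw Q l Q') (hQ : ∀ i, ∀ᵐ ψ ∂Q i, IsFiniteMeasureOnCompacts ψ)
    (hQ' : ∀ᵐ ψ ∂Q', IsFiniteMeasureOnCompacts ψ) :
    Tendsto (fun i ↦ ∫ p, laplaceWeight f w (recenter p) ∂campbell (Q i)) l
      (𝓝 (∫ p, laplaceWeight f w (recenter p) ∂campbell Q')) := by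
  obtain ⟨C, hC0, hC⟩ := h.exists_abs_le
  obtain ⟨r, hr⟩ := h.isTestFunction.hasCompactSupport.isBounded.subset_closedBall 0
  have hr (x : Vec d) (hx : r < ‖x‖) : f x = 0 :=
    image_eq_zero_of_notMem_tsupport fun hx' ↦ hx.not_ge (mem_closedBall_zero_iff.1 (hr hx'))
  have hcone := isTestFunction_cone (d := d) (r + R + 1)
  refine hQQ'.tendsto_integral_campbell hQ hQ'
    (h.measurable_laplaceWeight.comp measurable_recenter)
    (fun _ _ ↦ h.integrable_laplaceWeight_recenter) hC0
    (fun _ _ ↦ h.integral_abs_laplaceWeight_recenter_le hC0 hC)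
    (continuous_integral_vagueTop hcone.continuous hcone.hasCompactSupport)
    (measurable_integral_measure hcone.continuous.measurable)
    (fun _ ↦ integral_nonneg hcone.nonneg) fun η hη ↦ ?_
  obtain ⟨t, χ, hχ⟩ := h.exists_abs_sub_recenterApprox_le hC hC0 hr hη
  exact ⟨_, h.continuous_recenterApprox χ, h.measurable_recenterApprox χ, hχ⟩

lemma IsControlledPair.integral_laplaceWeight_recenter_campbell_eq (h : IsControlledPair R f w)
    [l.NeBot] (hQQ' : TendstoInLaw Q l Q') (hQ : ∀ i, ∀ᵐ ψ ∂Q i, IsFiniteMeasureOnCompacts ψ)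
    (hQ' : ∀ᵐ ψ ∂Q', IsFiniteMeasureOnCompacts ψ) (hms : ∀ i, MassStationaryLaw (Q i)) :
    ∫ p, laplaceWeight f w (recenter p) ∂campbell Q' = ∫ p, laplaceWeight f w p ∂campbell Q' := by
  refine tendsto_nhds_unique (h.tendsto_integral_laplaceWeight_recenter hQQ' hQ hQ') ?_
  refine (h.tendsto_integral_laplaceWeight hQQ' hQ hQ').congr fun i ↦ ?_
  have hpres := (hms i).measurePreserving_recenter (hQ i)
  conv_lhs => rw [← hpres.map_eq]
  exact integral_map measurable_recenter.aemeasurable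
    h.measurable_laplaceWeight.aestronglyMeasurable

theorem stmt11_general [l.NeBot] (hQ : ∀ i, ∀ᵐ ψ ∂Q i, BddFinite ψ) (hQ' : ∀ᵐ ψ ∂Q', BddFinite ψ)
    (hQQ' : TendstoInLaw Q l Q') (hms : ∀ i, MassStationaryLaw (Q i)) : MassStationaryLaw Q' := by
  simp only [bddFinite_iff_isFiniteMeasureOnCompacts] at hQ hQ'
  refine massStationaryLaw_of_measurePreserving_recenter hQ' ⟨measurable_recenter, ?_⟩
  have hmap : ∀ᵐ p ∂(campbell Q').map recenter, IsFiniteMeasureOnCompacts p.1 :=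
    (ae_map_iff measurable_recenter.aemeasurable
      (measurable_fst measurableSet_isFiniteMeasureOnCompacts)).2
        (ae_of_all _ isFiniteMeasureOnCompacts_recenter_fst)
  refine measure_ext_of_isControlledPair hmap (ae_campbell hQ')
    (fun _ _ _ h ↦ h.integrable_laplaceWeight_map_recenter_campbell hQ')
    (fun _ _ _ h ↦ h.integrable_laplaceWeight_campbell hQ') fun _ _ _ h ↦ ?_
  rw [integral_map measurable_recenter.aemeasurable h.measurable_laplaceWeight.aestronglyMeasurable]
  exact h.integral_laplaceWeight_recenter_campbell_eq hQQ' hQ hQ' hms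

end Limit

end VagueContinuity

/-- Mass-stationarity is preserved under convergence in distribution with
respect to the vague topology: if the laws `Q n` of mass-stationary random measures converge
weakly (tested against all bounded vaguely-continuous functions) to the law `Qlim` of a random
measure, then `Qlim` is mass-stationary. -/
theorem stmt11 {d : ℕ} (Q : ℕ → Measure (Measure (Vec d))) (Qlim : Measure (Measure (Vec d)))
    [∀ n, IsProbabilityMeasure (Q n)] [IsProbabilityMeasure Qlim]
    (hbf : ∀ n, ∀ᵐ ψ ∂(Q n), BddFinite ψ) (hbfl : ∀ᵐ ψ ∂Qlim, BddFinite ψ)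
    (hconv : ∀ G : Measure (Vec d) → ℝ,
      @Continuous (Measure (Vec d)) ℝ (vagueTop d) _ G → (∃ C : ℝ, ∀ ψ, |G ψ| ≤ C) →
      Filter.Tendsto (fun n => ∫ ψ, G ψ ∂(Q n)) Filter.atTop (nhds (∫ ψ, G ψ ∂Qlim)))
    (hms : ∀ n, MassStationaryLaw (Q n)) :
    MassStationaryLaw Qlim :=
  letI := vagueTop d
  stmt11_general hbf hbfl (fun G ↦ hconv G G.continuous ⟨‖G‖, G.norm_coe_le_norm⟩) hms
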